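/- Let X be a partial allocation and g an unallocated good. Suppose agent i champions agent j with v_i(X_i) ≥ v_i(X_j), agent i' champions agent k with v_{i'}(X_{i'}) ≥ v_{i'}(X_k), and agent i does not champion agent k (all championships with respect to the same unallocated good g), with G_{ij} and G_{i'k} the corresponding maximum-cardinality subsets. Then v_i(X_j ∖ G_{ij}) > v_i(X_k ∖ G_{i'k}). -/

import Mathlib

open Finset

/-- Additive value of a bundle `S` under per-good valuation `v`. -/
noncomputable def val {G : Type*} (v : G → ℝ) (S : Finset G) : ℝ := ∑ g ∈ S, v g

/-- `X` is EFX: no agent `i` strongly envies agent `j`, i.e. for every good `g`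
in `X j`, `v_i(X_i) ≥ v_i(X_j \ {g})`. -/
def EFX {G : Type*} [DecidableEq G] (v : Fin 3 → G → ℝ) (X : Fin 3 → Finset G) : Prop :=
  ∀ i j : Fin 3, ∀ g ∈ X j, val (v i) (X j \ {g}) ≤ val (v i) (X i)

/-- `κ_X(i,S)`: the minimum cardinality of a subset `S' ⊆ S` with `v_i(S') > v_i(X_i)`. -/
noncomputable def kappa {G : Type*} (v : G → ℝ) (Xi S : Finset G) : ℕ :=
  sInf {n : ℕ | ∃ S' ⊆ S, S'.card = n ∧ val v Xi < val v S'}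

/-- Agent `i` is a most envious agent for the bundle `S` under allocation `X`. -/
def MostEnvious {G : Type*} (v : Fin 3 → G → ℝ) (X : Fin 3 → Finset G)
    (i : Fin 3) (S : Finset G) : Prop :=
  val (v i) (X i) < val (v i) S ∧
    ∀ k : Fin 3, val (v k) (X k) < val (v k) S →
      kappa (v i) (X i) S ≤ kappa (v k) (X k) S

theorem val_le_val_of_subset {G : Type*} {v : G → ℝ} {M S T : Finset G}
    (hv : ∀ g ∈ M, 0 ≤ v g) (hT : T ⊆ M) (hST : S ⊆ T) : val v S ≤ val v T :=
  Finset.sum_le_sum_of_subset_of_nonneg hST fun a ha _ => hv a (hT ha)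

theorem kappa_le_card {G : Type*} {v : G → ℝ} {Y S T : Finset G}
    (hTS : T ⊆ S) (hT : val v Y < val v T) : kappa v Y S ≤ T.card :=
  Nat.sInf_le ⟨T, hTS, rfl, hT⟩

/-- Removing a maximum-cardinality set that preserves envy leaves exactly `κ` goods. -/
theorem kappa_eq_card_sdiff {G : Type*} [DecidableEq G] {v : G → ℝ} {Y S D : Finset G}
    (hDS : D ⊆ S) (hD : val v Y < val v (S \ D))
    (hmax : ∀ D' ⊆ S, val v Y < val v (S \ D') → D'.card ≤ D.card) :
    kappa v Y S = (S \ D).card := by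
  refine le_antisymm (kappa_le_card sdiff_subset hD) ?_
  refine le_csInf ⟨_, S \ D, sdiff_subset, rfl, hD⟩ ?_
  rintro _ ⟨T, hTS, rfl, hT⟩
  have h := hmax (S \ T) sdiff_subset (by rwa [Finset.sdiff_sdiff_eq_self hTS])
  rw [card_sdiff_of_subset hTS] at h
  rw [card_sdiff_of_subset hDS]
  omega

/-- If an agent does not envy `S` but envies `(S ∪ {g}) \ D`, then `D` avoids `g`, so the value
of `(S ∪ {g}) \ D` splits off the value of `g`. -/
theorem val_union_singleton_sdiff {G : Type*} [DecidableEq G] {u v : G → ℝ}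
    {M Y S D : Finset G} {g : G} (hu : ∀ a ∈ M, 0 ≤ u a) (hS : S ⊆ M) (hgS : g ∉ S)
    (hnoenvy : val u S ≤ val u Y) (hD : val u Y < val u ((S ∪ {g}) \ D)) :
    val v ((S ∪ {g}) \ D) = val v (S \ D) + v g := by
  have hgD : g ∉ D := fun hgD => by
    have hsub : (S ∪ {g}) \ D ⊆ S := by
      intro a ha
      simp only [mem_sdiff, mem_union, mem_singleton] at ha
      rcases ha with ⟨ha | rfl, hna⟩
      · exact ha
      · exact absurd hgD hna
    linarith [val_le_val_of_subset hu hS hsub]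
  have heq : (S ∪ {g}) \ D = insert g (S \ D) := by
    rw [union_comm, ← insert_eq, insert_sdiff_of_notMem _ hgD]
  rw [heq, _root_.val, sum_insert (fun h => hgS (mem_sdiff.mp h).1), add_comm, _root_.val]

/-- Observation 8: if `i` champions `j` (without envying `j`), `i'` champions `k`
(without envying `k`), and `i` does not champion `k`, then `i` prefers the upper half
`X_j \ G_ij` to the upper half `X_k \ G_i'k`. -/
theorem upper_half_comparison {G : Type*} [DecidableEq G] (M : Finset G)
    (v : Fin 3 → G → ℝ) (hv : ∀ i : Fin 3, ∀ g ∈ M, 0 ≤ v i g)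
    (X : Fin 3 → Finset G) (hXM : ∀ i, X i ⊆ M)
    (hdisj : ∀ i j, i ≠ j → Disjoint (X i) (X j))
    (g : G) (hg : g ∈ M) (hun : g ∉ X 0 ∪ X 1 ∪ X 2)
    (i j i' k : Fin 3)
    (hch : MostEnvious v X i (X j ∪ {g}))
    (hnoenvy : val (v i) (X j) ≤ val (v i) (X i))
    (hch' : MostEnvious v X i' (X k ∪ {g}))
    (hnoenvy' : val (v i') (X k) ≤ val (v i') (X i'))
    (hnotch : ¬ MostEnvious v X i (X k ∪ {g}))
    (Gij : Finset G) (hGsub : Gij ⊆ X j ∪ {g})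
    (hGval : val (v i) (X i) < val (v i) ((X j ∪ {g}) \ Gij))
    (hGmax : ∀ G' ⊆ X j ∪ {g},
      val (v i) (X i) < val (v i) ((X j ∪ {g}) \ G') → G'.card ≤ Gij.card)
    (Gik : Finset G) (hGsub' : Gik ⊆ X k ∪ {g})
    (hGval' : val (v i') (X i') < val (v i') ((X k ∪ {g}) \ Gik))
    (hGmax' : ∀ G' ⊆ X k ∪ {g},
      val (v i') (X i') < val (v i') ((X k ∪ {g}) \ G') → G'.card ≤ Gik.card) :
    val (v i) (X k \ Gik) < val (v i) (X j \ Gij) := by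
  have hgX : ∀ l : Fin 3, g ∉ X l := by
    simpa [Fin.forall_fin_succ, not_or, and_assoc] using hun
  have hB : val (v i) ((X k ∪ {g}) \ Gik) ≤ val (v i) (X i) := by
    by_contra! hlt
    have hM : X k ∪ {g} ⊆ M := union_subset (hXM k) (singleton_subset_iff.mpr hg)
    refine hnotch ⟨hlt.trans_le (val_le_val_of_subset (hv i) hM sdiff_subset), fun l hl => ?_⟩
    calc kappa (v i) (X i) (X k ∪ {g}) ≤ ((X k ∪ {g}) \ Gik).card :=
          kappa_le_card sdiff_subset hlt
      _ = kappa (v i') (X i') (X k ∪ {g}) := (kappa_eq_card_sdiff hGsub' hGval' hGmax').symm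
      _ ≤ kappa (v l) (X l) (X k ∪ {g}) := hch'.2 l hl
  have hj := val_union_singleton_sdiff (v := v i) (hv i) (hXM j) (hgX j) hnoenvy hGval
  have hk := val_union_singleton_sdiff (v := v i) (hv i') (hXM k) (hgX k) hnoenvy' hGval'
  linarith
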